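/- Let S be an idempotent covered semigroup and let (s,t,α), (u,v,β) ∈ T(S). Then (s,t,α) 𝓙 (u,v,β) in T(S) if and only if t 𝓙 v in S. -/

import Mathlib

namespace SemibandEmbed

/-- The two-element right-zero semigroup `R₂ = {σ, τ}`. -/
inductive R2 : Type where
  | σ : R2
  | τ : R2
  deriving DecidableEq

section GreenDefs

variable {S : Type*} [Semigroup S]

/-- Green's relation 𝓡 : `a 𝓡 b` iff `a S¹ = b S¹` (inside `S¹ = WithOne S`). -/
def greenR (a b : S) : Prop :=
  {x : WithOne S | ∃ u : WithOne S, x = (a : WithOne S) * u} =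
    {x : WithOne S | ∃ u : WithOne S, x = (b : WithOne S) * u}

/-- Green's relation 𝓛 : `a 𝓛 b` iff `S¹ a = S¹ b`. -/
def greenL (a b : S) : Prop :=
  {x : WithOne S | ∃ u : WithOne S, x = u * (a : WithOne S)} =
    {x : WithOne S | ∃ u : WithOne S, x = u * (b : WithOne S)}

/-- Green's relation 𝓗 = 𝓛 ∩ 𝓡. -/
def greenH (a b : S) : Prop := greenL a b ∧ greenR a b

/-- Green's relation 𝓓 : `a 𝓓 b` iff `a 𝓡 c` and `c 𝓛 b` for some `c`. -/
def greenD (a b : S) : Prop := ∃ c : S, greenR a c ∧ greenL c b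

/-- Green's relation 𝓙 : `a 𝓙 b` iff `S¹ a S¹ = S¹ b S¹`. -/
def greenJ (a b : S) : Prop :=
  {x : WithOne S | ∃ u v : WithOne S, x = u * (a : WithOne S) * v} =
    {x : WithOne S | ∃ u v : WithOne S, x = u * (b : WithOne S) * v}

/-- Mitsch's natural partial order on a semigroup. -/
def natLe (a b : S) : Prop := ∃ x y : S, a = x * b ∧ a = b * y ∧ a = a * y

end GreenDefs

/-- A semigroup is idempotent covered if every element `s` satisfies `s e = s = f s`
for some idempotents `e`, `f`. -/
def IdemCovered (S : Type*) [Semigroup S] : Prop :=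
  ∀ s : S, ∃ e f : S, IsIdempotentElem e ∧ IsIdempotentElem f ∧ s * e = s ∧ f * s = s

/-- A semigroup is regular if every `a` satisfies `a x a = a` for some `x`. -/
def IsRegularSemigroup (S : Type*) [Semigroup S] : Prop :=
  ∀ a : S, ∃ x : S, a * x * a = a

/-- A semigroup is periodic if every element generates a finite monogenic subsemigroup,
i.e. `aᵐ = aⁿ` for some `0 < m < n` (powers computed in `S¹ = WithOne S`). -/
def IsPeriodic (S : Type*) [Semigroup S] : Prop :=
  ∀ a : S, ∃ m n : ℕ, 0 < m ∧ m < n ∧ (a : WithOne S) ^ m = (a : WithOne S) ^ n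

/-- `𝓗` is a left congruence. -/
def IsLeftCongH (S : Type*) [Semigroup S] : Prop :=
  ∀ a b c : S, greenH a b → greenH (c * a) (c * b)

/-- `𝓗` is a right congruence. -/
def IsRightCongH (S : Type*) [Semigroup S] : Prop :=
  ∀ a b c : S, greenH a b → greenH (a * c) (b * c)

/-- A semigroup is completely regular if every element is 𝓗-related to an idempotent. -/
def IsCompletelyRegular (S : Type*) [Semigroup S] : Prop :=
  ∀ a : S, ∃ e : S, IsIdempotentElem e ∧ greenH a e

section SemidirectProduct

variable {S : Type*} [Semigroup S]

/-- The multiplication of the semidirect product `(S × S) * R₂`: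
`(t₁,s₁,σ)·(t₂,s₂,α) = (t₁s₂, s₁s₂, α)` and `(t₁,s₁,τ)·(t₂,s₂,α) = (t₁t₂, s₁t₂, α)`. -/
def sdMul (x y : S × S × R2) : S × S × R2 :=
  match x, y with
  | (t₁, s₁, R2.σ), (_, s₂, α) => (t₁ * s₂, s₁ * s₂, α)
  | (t₁, s₁, R2.τ), (t₂, _, α) => (t₁ * t₂, s₁ * t₂, α)

instance : Mul (S × S × R2) := ⟨sdMul⟩

theorem sdMul_def (x y : S × S × R2) : x * y = sdMul x y := rfl

instance : Semigroup (S × S × R2) where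
  mul_assoc x y z := by
    obtain ⟨t₁, s₁, α₁⟩ := x
    obtain ⟨t₂, s₂, α₂⟩ := y
    obtain ⟨t₃, s₃, α₃⟩ := z
    cases α₁ <;> cases α₂ <;> simp [sdMul_def, sdMul, mul_assoc]

/-- The set `E = {(s,t,α) ∈ E(T*R₂) : s ∈ S¹ t}`. -/
def Eset (S : Type*) [Semigroup S] : Set (S × S × R2) :=
  {x | IsIdempotentElem x ∧ ∃ a : WithOne S, (x.1 : WithOne S) = a * (x.2.1 : WithOne S)}

/-- `T(S)`: the subsemigroup of the semidirect product generated by `E`. -/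
def TS (S : Type*) [Semigroup S] : Subsemigroup (S × S × R2) :=
  Subsemigroup.closure (Eset S)

/-- Green's `𝓛` is a right congruence. -/
theorem greenL_mul_right {S : Type*} [Semigroup S] {a b : S} (hab : greenL a b) (c : S) :
    greenL (a * c) (b * c) := by
  have key : ∀ {a b : S}, greenL a b → ∀ x : WithOne S,
      (∃ u : WithOne S, x = u * ((a * c : S) : WithOne S)) →
      (∃ u : WithOne S, x = u * ((b * c : S) : WithOne S)) := by
    intro a b hab x hx
    obtain ⟨u, rfl⟩ := hx
    have h1 : (u * (a : WithOne S)) ∈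
        {x : WithOne S | ∃ u : WithOne S, x = u * (a : WithOne S)} := ⟨u, rfl⟩
    rw [greenL] at hab
    rw [hab] at h1
    obtain ⟨w, hw⟩ := h1
    refine ⟨w, ?_⟩
    rw [WithOne.coe_mul, WithOne.coe_mul, ← mul_assoc, hw, mul_assoc]
  have hab' : greenL b a := hab.symm
  ext x
  exact ⟨key hab x, key hab' x⟩

/-- `R(S) = {(s,t,α) ∈ T(S) : s 𝓛 t}`, a subsemigroup of `T(S)`. -/
def RS (S : Type*) [Semigroup S] : Subsemigroup ↥(TS S) where
  carrier := {x | greenL (x : S × S × R2).1 (x : S × S × R2).2.1}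
  mul_mem' := by
    rintro ⟨⟨s, t, α⟩, hx⟩ ⟨⟨u, v, β⟩, hy⟩ hxs hys
    simp only [Set.mem_setOf_eq] at hxs hys ⊢
    cases α <;> exact greenL_mul_right hxs _

end SemidirectProduct

/-!
`T(S)` consists of the triples `(s, t, α)` with `s ∈ S¹ t` such that `t` has an idempotent left
identity and an idempotent right identity. Left multiplication in `T(S)` replaces `t` by an element
of `S t` because the action of `R₂` selects either `t` or `s ∈ S¹ t`; right multiplication
multiplies `t` on the right. So `x ≤ y` in the 𝓙-order of `T(S)` gives the same relation
between the middle coordinates in `S`.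

Conversely, if `t = p v q` and `s = a t`, then `(s, t, α) = (a p, p, σ) (u, v, β) (q, q, α)`,
where `p` and `q` can be cut down by the idempotent identities of `t` and `v` so that the outer
factors lie in `T(S)`.
-/

section GreenPreorders

variable {S : Type*} [Semigroup S]

/-- The preorder underlying Green's relation 𝓛: `a ∈ S¹ b`. -/
def GreenLLE (a b : S) : Prop := ∃ u : WithOne S, (a : WithOne S) = u * b

/-- The preorder underlying Green's relation 𝓙: `a ∈ S¹ b S¹`. -/
def GreenJLE (a b : S) : Prop := ∃ u v : WithOne S, (a : WithOne S) = u * b * v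

theorem exists_coe_eq_mul_coe (a : WithOne S) (b : S) : ∃ c : S, (c : WithOne S) = a * b := by
  cases a with
  | one => exact ⟨b, (one_mul _).symm⟩
  | coe a => exact ⟨a * b, WithOne.coe_mul a b⟩

theorem GreenLLE.refl (a : S) : GreenLLE a a := ⟨1, (one_mul _).symm⟩

theorem GreenLLE.mul_right {a b : S} (h : GreenLLE a b) (c : S) : GreenLLE (a * c) (b * c) := by
  obtain ⟨u, hu⟩ := h
  exact ⟨u, by rw [WithOne.coe_mul, WithOne.coe_mul, hu, mul_assoc]⟩

theorem GreenLLE.mul_eq_self {a b e : S} (h : GreenLLE a b) (hbe : b * e = b) : a * e = a := by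
  obtain ⟨u, hu⟩ := h
  apply WithOne.coe_injective
  rw [WithOne.coe_mul, hu, mul_assoc, ← WithOne.coe_mul, hbe]

theorem GreenLLE.greenJLE {a b : S} (h : GreenLLE a b) : GreenJLE a b := by
  obtain ⟨u, hu⟩ := h
  exact ⟨u, 1, by rw [hu, mul_one]⟩

theorem GreenJLE.refl (a : S) : GreenJLE a a := (GreenLLE.refl a).greenJLE

theorem GreenJLE.trans {a b c : S} (hab : GreenJLE a b) (hbc : GreenJLE b c) : GreenJLE a c := by
  obtain ⟨u, v, hab⟩ := hab
  obtain ⟨u', v', hbc⟩ := hbc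
  exact ⟨u * u', v' * v, by simp only [hab, hbc, mul_assoc]⟩

theorem greenJLE_mul_left (a b : S) : GreenJLE (a * b) b := ⟨a, 1, by simp⟩

theorem greenJLE_mul_right (a b : S) : GreenJLE (a * b) a := ⟨1, b, by simp⟩

theorem greenJ_iff_greenJLE {a b : S} : greenJ a b ↔ GreenJLE a b ∧ GreenJLE b a := by
  constructor
  · intro h
    exact ⟨h.subset ⟨1, 1, by simp⟩, h.superset ⟨1, 1, by simp⟩⟩
  · rintro ⟨⟨u, v, hab⟩, ⟨w, z, hba⟩⟩
    ext x
    constructor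
    · rintro ⟨p, q, rfl⟩
      exact ⟨p * u, v * q, by simp only [hab, mul_assoc]⟩
    · rintro ⟨p, q, rfl⟩
      exact ⟨p * w, z * q, by simp only [hba, mul_assoc]⟩

theorem GreenJLE.map {T : Type*} [Semigroup T] {φ : T → S}
    (hleft : ∀ a x, GreenJLE (φ (a * x)) (φ x)) (hright : ∀ x b, GreenJLE (φ (x * b)) (φ x))
    {x y : T} (h : GreenJLE x y) : GreenJLE (φ x) (φ y) := by
  obtain ⟨u, v, h⟩ := h
  obtain ⟨z, hz, hzy⟩ : ∃ z : T, (z : WithOne T) = u * y ∧ GreenJLE (φ z) (φ y) := by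
    cases u with
    | one => exact ⟨y, (one_mul _).symm, .refl _⟩
    | coe a => exact ⟨a * y, WithOne.coe_mul a y, hleft a y⟩
  rw [← hz] at h
  refine GreenJLE.trans ?_ hzy
  cases v with
  | one =>
    rw [mul_one, WithOne.coe_inj] at h
    exact h ▸ .refl _
  | coe b =>
    rw [← WithOne.coe_mul, WithOne.coe_inj] at h
    exact h ▸ hright z b

end GreenPreorders

section IdempotentCovers

variable {S : Type*} [Semigroup S]

/-- An element with an idempotent right identity and an idempotent left identity, so that
`IdemCovered S` says that all elements of `S` are such. -/
def IsIdemCovered (s : S) : Prop :=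
  ∃ e f : S, IsIdempotentElem e ∧ IsIdempotentElem f ∧ s * e = s ∧ f * s = s

theorem isIdemCovered_of_mul_eq_self {s t : S} (hst : GreenLLE s t) (hts : t * s = t) :
    IsIdemCovered t := by
  have hs : IsIdempotentElem s := hst.mul_eq_self hts
  obtain ⟨a, ha⟩ := hst
  cases a with
  | one =>
    rw [one_mul, WithOne.coe_inj] at ha
    exact ⟨s, s, hs, hs, hts, ha ▸ hs⟩
  | coe a =>
    rw [← WithOne.coe_mul, WithOne.coe_inj] at ha
    have hta : t * a * t = t := by rw [mul_assoc, ← ha, hts]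
    exact ⟨s, t * a, hs, by rw [IsIdempotentElem, ← mul_assoc, hta], hts, hta⟩

theorem exists_isIdemCovered_coe_eq {e f : S} (he : IsIdempotentElem e) (hf : IsIdempotentElem f)
    (a : WithOne S) : ∃ p : S, IsIdemCovered p ∧ (p : WithOne S) = e * a * f := by
  obtain ⟨c, hc⟩ := exists_coe_eq_mul_coe a f
  have hcf : c * f = c := GreenLLE.mul_eq_self ⟨a, hc⟩ hf
  refine ⟨e * c, ⟨f, e, hf, he, by rw [mul_assoc, hcf], by rw [← mul_assoc, he.eq]⟩, ?_⟩
  rw [WithOne.coe_mul, hc, mul_assoc]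

theorem GreenJLE.exists_eq_mul_mul {t v : S} (h : GreenJLE t v) (ht : IsIdemCovered t)
    (hv : IsIdemCovered v) : ∃ p q : S, IsIdemCovered p ∧ IsIdemCovered q ∧ t = p * v * q := by
  obtain ⟨a, b, hab⟩ := h
  obtain ⟨e, f, he, hf, hte, hft⟩ := ht
  obtain ⟨e', f', he', hf', hve', hfv'⟩ := hv
  obtain ⟨p, hp, hpa⟩ := exists_isIdemCovered_coe_eq hf hf' a
  obtain ⟨q, hq, hqb⟩ := exists_isIdemCovered_coe_eq he' he b
  refine ⟨p, q, hp, hq, WithOne.coe_injective ?_⟩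
  calc (t : WithOne S) = ((f * t * e : S) : WithOne S) := by rw [hft, hte]
    _ = f * (a * v * b) * e := by rw [WithOne.coe_mul, WithOne.coe_mul, hab]
    _ = f * (a * ((f' * v * e' : S) : WithOne S) * b) * e := by rw [hfv', hve']
    _ = f * a * f' * v * (e' * b * e) := by simp only [WithOne.coe_mul, mul_assoc]
    _ = ((p * v * q : S) : WithOne S) := by rw [← hpa, ← hqb, WithOne.coe_mul, WithOne.coe_mul]

end IdempotentCovers

section GeneratedSubsemigroup

variable {S : Type*}

/-- The action of `R₂` underlying the semidirect product: the coordinate of the right-hand factor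
by which the first two coordinates of a left-hand factor with label `α` get multiplied. -/
def actCoord (α : R2) (x : S × S × R2) : S :=
  match α with
  | R2.σ => x.2.1
  | R2.τ => x.1

theorem actCoord_diag (α β : R2) (s : S) : actCoord α (s, s, β) = s := by
  cases α <;> rfl

variable [Semigroup S]

theorem mul_eq_mk_actCoord (x y : S × S × R2) :
    x * y = (x.1 * actCoord x.2.2 y, x.2.1 * actCoord x.2.2 y, y.2.2) := by
  obtain ⟨s, t, α⟩ := x
  cases α <;> rfl

theorem greenLLE_actCoord {x : S × S × R2} (h : GreenLLE x.1 x.2.1) (α : R2) :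
    GreenLLE (actCoord α x) x.2.1 := by
  cases α with
  | σ => exact .refl _
  | τ => exact h

theorem mk_σ_mem_Eset {s e : S} (he : IsIdempotentElem e) (hse : s * e = s) :
    (s, e, R2.σ) ∈ Eset S := by
  refine ⟨?_, s, ?_⟩
  · simp only [IsIdempotentElem, mul_eq_mk_actCoord, actCoord, hse, he.eq]
  · rw [← WithOne.coe_mul, hse]

theorem diag_mem_Eset {e : S} (he : IsIdempotentElem e) (α : R2) : (e, e, α) ∈ Eset S := by
  refine ⟨?_, GreenLLE.refl e⟩
  simp only [IsIdempotentElem, mul_eq_mk_actCoord, actCoord_diag, he.eq]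

theorem isIdemCovered_of_mem_Eset {x : S × S × R2} (hx : x ∈ Eset S) : IsIdemCovered x.2.1 := by
  obtain ⟨s, t, α⟩ := x
  obtain ⟨hidem, hst⟩ := hx
  rw [IsIdempotentElem, mul_eq_mk_actCoord, Prod.mk.injEq, Prod.mk.injEq] at hidem
  obtain ⟨-, ht, -⟩ := hidem
  cases α with
  | σ => exact ⟨t, t, ht, ht, ht, ht⟩
  | τ => exact isIdemCovered_of_mul_eq_self hst ht

theorem mk_mem_TS {s t : S} (hst : GreenLLE s t) (ht : IsIdemCovered t) (α : R2) :
    (s, t, α) ∈ TS S := by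
  obtain ⟨a, ha⟩ := hst
  obtain ⟨e, f, he, hf, hte, hft⟩ := ht
  obtain ⟨c, hca⟩ := exists_coe_eq_mul_coe a f
  have hcf : c * f = c := GreenLLE.mul_eq_self ⟨a, hca⟩ hf
  have hct : c * t = s := WithOne.coe_injective <| by
    rw [WithOne.coe_mul, hca, mul_assoc, ← WithOne.coe_mul, hft, ha]
  have hse : s * e = s := GreenLLE.mul_eq_self ⟨a, ha⟩ hte
  have hprod : (s, t, α) = (c, f, R2.σ) * (f, f, R2.τ) * (t, e, R2.σ) * (e, e, α) := by
    simp only [mul_eq_mk_actCoord, actCoord, hcf, hf.eq, hct, hft, hte, hse]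
  have mem_of_Eset {x : S × S × R2} (hx : x ∈ Eset S) : x ∈ TS S := Subsemigroup.subset_closure hx
  rw [hprod]
  exact mul_mem (mul_mem (mul_mem (mem_of_Eset (mk_σ_mem_Eset hf hcf))
    (mem_of_Eset (diag_mem_Eset hf _))) (mem_of_Eset (mk_σ_mem_Eset he hte)))
    (mem_of_Eset (diag_mem_Eset he _))

theorem mem_TS_iff {x : S × S × R2} :
    x ∈ TS S ↔ GreenLLE x.1 x.2.1 ∧ IsIdemCovered x.2.1 := by
  refine ⟨fun hx ↦ ?_, fun hx ↦ mk_mem_TS hx.1 hx.2 x.2.2⟩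
  induction hx using Subsemigroup.closure_induction with
  | mem x hx => exact ⟨hx.2, isIdemCovered_of_mem_Eset hx⟩
  | mul x y _ _ hx hy =>
    obtain ⟨hxL, _, f, _, hf, _, hfx⟩ := hx
    obtain ⟨hyL, e, _, he, _, hye, _⟩ := hy
    rw [mul_eq_mk_actCoord]
    refine ⟨hxL.mul_right _, e, f, he, hf, ?_, ?_⟩
    · rw [mul_assoc, (greenLLE_actCoord hyL _).mul_eq_self hye]
    · rw [← mul_assoc, hfx]

theorem GreenJLE.of_TS {x y : TS S} (h : GreenJLE x y) : GreenJLE x.1.2.1 y.1.2.1 := by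
  refine h.map (φ := fun z : TS S ↦ z.1.2.1) (fun a x ↦ ?_) (fun x b ↦ ?_)
  · have hx : GreenLLE (actCoord a.1.2.2 x.1) x.1.2.1 :=
      greenLLE_actCoord (mem_TS_iff.mp x.2).1 _
    rw [MulMemClass.coe_mul, mul_eq_mk_actCoord]
    exact (greenJLE_mul_left _ _).trans hx.greenJLE
  · rw [MulMemClass.coe_mul, mul_eq_mk_actCoord]
    exact greenJLE_mul_right _ _

theorem greenJLE_TS_iff {x y : TS S} : GreenJLE x y ↔ GreenJLE x.1.2.1 y.1.2.1 := by
  refine ⟨GreenJLE.of_TS, fun h ↦ ?_⟩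
  obtain ⟨⟨s, t, α⟩, hx⟩ := x
  obtain ⟨⟨u, v, β⟩, hy⟩ := y
  obtain ⟨⟨a, ha⟩, ht⟩ := mem_TS_iff.mp hx
  obtain ⟨p, q, hp, hq, rfl⟩ := h.exists_eq_mul_mul ht (mem_TS_iff.mp hy).2
  obtain ⟨c, hc⟩ := exists_coe_eq_mul_coe a p
  have hs : c * v * q = s := WithOne.coe_injective <| by
    simp only [ha, WithOne.coe_mul, hc, mul_assoc]
  let l : TS S := ⟨(c, p, R2.σ), mk_mem_TS ⟨a, hc⟩ hp R2.σ⟩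
  let r : TS S := ⟨(q, q, α), mk_mem_TS (.refl q) hq α⟩
  have hprod : ⟨(s, p * v * q, α), hx⟩ = l * ⟨(u, v, β), hy⟩ * r := by
    apply Subtype.ext
    simp only [l, r, MulMemClass.coe_mul, mul_eq_mk_actCoord, actCoord_diag]
    simp only [actCoord, hs]
  exact ⟨l, r, by rw [hprod, WithOne.coe_mul, WithOne.coe_mul]⟩

end GeneratedSubsemigroup

theorem statement_11_general {S : Type*} [Semigroup S] (s t u v : S) (α β : R2)
    (hx : ((s, t, α) : S × S × R2) ∈ TS S) (hy : ((u, v, β) : S × S × R2) ∈ TS S) :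
    greenJ (⟨(s, t, α), hx⟩ : ↥(TS S)) ⟨(u, v, β), hy⟩ ↔ greenJ t v := by
  simp only [greenJ_iff_greenJLE, greenJLE_TS_iff]

/-- description of Green's relation 𝓙 on `T(S)`. -/
theorem statement_11 {S : Type*} [Semigroup S] (hS : IdemCovered S)
    (s t u v : S) (α β : R2)
    (hx : ((s, t, α) : S × S × R2) ∈ TS S) (hy : ((u, v, β) : S × S × R2) ∈ TS S) :
    greenJ (⟨(s, t, α), hx⟩ : ↥(TS S)) ⟨(u, v, β), hy⟩ ↔ greenJ t v :=
  statement_11_general s t u v α β hx hy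

end SemibandEmbed
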